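/- Let ℓ > 0. For every x ∈ S one has u_ℓ(x) ≥ 0. Moreover, x ∈ S is weakly Pareto optimal for min_{x∈S} F(x) if and only if u_ℓ(x) = 0. -/

import Mathlib

/-- The regularized merit function
`u_ℓ(x) = max_{y ∈ S} min_i (F i x - F i y - (ℓ/2)‖x - y‖²)` (the maximum is attained under
the standing convexity assumptions, so it coincides with the supremum below). -/
noncomputable def meritU {n m : ℕ} (ℓ : ℝ) (S : Set (EuclideanSpace ℝ (Fin n)))
    (F : Fin m → EuclideanSpace ℝ (Fin n) → ℝ)
    (x : EuclideanSpace ℝ (Fin n)) : ℝ :=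
  sSup ((fun y => ⨅ i, (F i x - F i y - ℓ / 2 * ‖x - y‖ ^ 2)) '' S)

theorem aux_lower {n : ℕ} (f : EuclideanSpace ℝ (Fin n) → ℝ) (hf : ConvexOn ℝ Set.univ f)
    (x : EuclideanSpace ℝ (Fin n)) : ∃ K : ℝ, ∀ y, f x - K * ‖x - y‖ ≤ f y := by
  have hc : ContinuousAt f x := (hf.continuousOn isOpen_univ).continuousAt Filter.univ_mem
  obtain ⟨r, hr, h⟩ := Metric.continuousAt_iff.1 hc 1 one_pos
  refine ⟨2 / r, fun y => ?_⟩
  rcases eq_or_ne x y with rfl | hxy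
  · simp
  have hd : 0 < ‖x - y‖ := norm_pos_iff.2 (sub_ne_zero.2 hxy)
  set d := ‖x - y‖ with hdd
  set s := r / 2 with hs
  have hs0 : 0 < s := by positivity
  set z := x + (s / d) • (x - y) with hz
  have hzx : dist z x < r := by
    rw [dist_eq_norm, hz, add_sub_cancel_left, norm_smul, ← hdd, Real.norm_of_nonneg (by positivity),
      div_mul_cancel₀ _ hd.ne']
    linarith
  have h1 := h hzx
  rw [Real.dist_eq, abs_lt] at h1
  have h2 := hf.2 (Set.mem_univ y) (Set.mem_univ z)
    (show 0 ≤ s / (s + d) by positivity) (show 0 ≤ d / (s + d) by positivity) (by field_simp)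
  have h3 : (s / (s + d)) • y + (d / (s + d)) • z = x := by
    rw [hz]
    have e1 : s / (s + d) - d / (s + d) * (s / d) = 0 := by field_simp; ring
    have e2 : d / (s + d) + d / (s + d) * (s / d) = 1 := by field_simp; ring
    calc _ = (s / (s + d) - d / (s + d) * (s / d)) • y
          + (d / (s + d) + d / (s + d) * (s / d)) • x := by module
      _ = x := by rw [e1, e2]; simp
  rw [h3, smul_eq_mul, smul_eq_mul] at h2
  have h4 : (s + d) * f x ≤ s * f y + d * f z := by
    calc (s + d) * f x ≤ (s + d) * (s / (s + d) * f y + d / (s + d) * f z) := by gcongr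
      _ = _ := by field_simp
  have h5 : d * f z ≤ d * (f x + 1) := by gcongr; linarith [h1.2]
  have h6 : s * f x - d ≤ s * f y := by linarith
  have h7 : s * (f x - 2 / r * d) ≤ s * f y := by
    have : s * (2 / r * d) = d := by rw [hs]; field_simp
    linarith
  exact le_of_mul_le_mul_left h7 hs0

/-- `u_ℓ ≥ 0` on `S`, and `x ∈ S` is weakly Pareto optimal iff `u_ℓ x = 0`. -/
theorem meritU_nonneg_and_zero_iff_weak_pareto {n m : ℕ} (hm : 0 < m)
    (S : Set (EuclideanSpace ℝ (Fin n))) (hS : S.Nonempty)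
    (hSclosed : IsClosed S) (hSconv : Convex ℝ S)
    (F : Fin m → EuclideanSpace ℝ (Fin n) → ℝ)
    (hFconv : ∀ i, ConvexOn ℝ Set.univ (F i))
    (ℓ : ℝ) (hℓ : 0 < ℓ) :
    (∀ x ∈ S, 0 ≤ meritU ℓ S F x) ∧
    (∀ x ∈ S, ((¬ ∃ z ∈ S, ∀ i, F i z < F i x) ↔ meritU ℓ S F x = 0)) := by
  have : Nonempty (Fin m) := ⟨⟨0, hm⟩⟩
  have hb : ∀ x, BddAbove
      ((fun y => ⨅ i, (F i x - F i y - ℓ / 2 * ‖x - y‖ ^ 2)) '' S) := by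
    intro x
    obtain ⟨K, hK⟩ := aux_lower (F ⟨0, hm⟩) (hFconv _) x
    refine ⟨K ^ 2 / (2 * ℓ), ?_⟩
    rintro _ ⟨y, -, rfl⟩
    refine (ciInf_le (Set.finite_range _).bddBelow (⟨0, hm⟩ : Fin m)).trans ?_
    have h1 := hK y
    rw [le_div_iff₀ (by positivity)]
    nlinarith [sq_nonneg (K - ℓ * ‖x - y‖), mul_le_mul_of_nonneg_left h1 hℓ.le]
  have h0 : ∀ x ∈ S, 0 ≤ meritU ℓ S F x := by
    intro x hx
    exact le_csSup (hb x) ⟨x, hx, by simp⟩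
  refine ⟨h0, fun x hx => ⟨fun h => le_antisymm ?_ (h0 x hx), ?_⟩⟩
  · refine csSup_le (hS.image _) ?_
    rintro _ ⟨y, hy, rfl⟩
    by_contra! hlt
    refine h ⟨y, hy, fun i => ?_⟩
    have h1 := hlt.trans_le (ciInf_le (Set.finite_range _).bddBelow i)
    have : 0 ≤ ℓ / 2 * ‖x - y‖ ^ 2 := by positivity
    linarith
  · rintro hu ⟨z, hz, hzF⟩
    obtain ⟨j, hj⟩ := Finite.exists_min (fun i => F i x - F i z)
    set δ := F j x - F j z with hδ
    have hδ0 : 0 < δ := sub_pos.2 (hzF j)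
    set D := ‖x - z‖ with hD
    have hD0 : 0 ≤ D := norm_nonneg _
    set t := δ / (δ + ℓ * D ^ 2) with ht
    have hden : 0 < δ + ℓ * D ^ 2 := by positivity
    have ht0 : 0 < t := by positivity
    have ht1 : t ≤ 1 := by
      rw [ht, div_le_one hden]
      have : 0 ≤ ℓ * D ^ 2 := by positivity
      linarith
    have htd : t * (δ + ℓ * D ^ 2) = δ := div_mul_cancel₀ _ hden.ne'
    have hyS : (1 - t) • x + t • z ∈ S :=
      hSconv hx hz (by linarith) ht0.le (by ring)
    have hn : ‖x - ((1 - t) • x + t • z)‖ = t * D := by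
      have : x - ((1 - t) • x + t • z) = t • (x - z) := by module
      rw [this, norm_smul, Real.norm_of_nonneg ht0.le]
    have hle := le_csSup (hb x) ⟨_, hyS, rfl⟩
    change _ ≤ meritU ℓ S F x at hle
    rw [hu] at hle
    obtain ⟨i, hi⟩ := exists_eq_ciInf_of_finite
      (f := fun i => F i x - F i ((1 - t) • x + t • z)
        - ℓ / 2 * ‖x - ((1 - t) • x + t • z)‖ ^ 2)
    simp only [] at hle hi
    rw [← hi, hn] at hle
    have hc := (hFconv i).2 (Set.mem_univ x) (Set.mem_univ z)
      (show 0 ≤ 1 - t by linarith) ht0.le (by ring)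
    rw [smul_eq_mul, smul_eq_mul] at hc
    have h1 : t * δ ≤ t * (F i x - F i z) := mul_le_mul_of_nonneg_left (hj i) ht0.le
    have h2 : t * δ - ℓ / 2 * (t * D) ^ 2 ≤ 0 := by linarith
    have h3 : t * (t * (δ + ℓ * D ^ 2)) = t * δ := by rw [htd]
    have h4 : 0 < t * t * δ := by positivity
    have h5 : 0 < t * δ := by positivity
    nlinarith
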